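/- For all real r > 1 and x > 1 one has N^{FIX}_{r,1}(x) ≤ N^{DM}_r(x), N^{DM}_r(x) ≤ 2·N^{ALG}_r(x), and N^{ALG}_r(x) ≤ N^{FIX}_{r²,1}(x), where N^{FIX}_{r,σ}(x) = #{(p,q) : p, q prime, √(x/r) < p ≤ √(r^σ·x), √(x/r) < q ≤ √(r^σ·x), p·q ≤ x}, N^{DM}_r(x) = #{(p,q) : p, q prime, p/r < q < r·p, x/r < p·q ≤ x}, and N^{ALG}_r(x) = #{(p,q) : p, q prime, √x/r < p ≤ √x, x/(r·p) < q ≤ x/p}. -/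

import Mathlib

/-- Prime-pair count of the fixed-bound notion. -/
noncomputable def NFIX (r σ x : ℝ) : ℕ :=
  Nat.card {pq : ℕ × ℕ // pq.1.Prime ∧ pq.2.Prime ∧
    Real.sqrt (x / r) < (pq.1 : ℝ) ∧ (pq.1 : ℝ) ≤ Real.sqrt (r ^ σ * x) ∧
    Real.sqrt (x / r) < (pq.2 : ℝ) ∧ (pq.2 : ℝ) ≤ Real.sqrt (r ^ σ * x) ∧
    (pq.1 : ℝ) * (pq.2 : ℝ) ≤ x}

/-- Prime-pair count of the de Weger notion. -/
noncomputable def NDM (r x : ℝ) : ℕ :=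
  Nat.card {pq : ℕ × ℕ // pq.1.Prime ∧ pq.2.Prime ∧
    (pq.1 : ℝ) / r < (pq.2 : ℝ) ∧ (pq.2 : ℝ) < r * (pq.1 : ℝ) ∧
    x / r < (pq.1 : ℝ) * (pq.2 : ℝ) ∧ (pq.1 : ℝ) * (pq.2 : ℝ) ≤ x}

/-- Prime-pair count of the algorithmically inspired notion. -/
noncomputable def NALG (r x : ℝ) : ℕ :=
  Nat.card {pq : ℕ × ℕ // pq.1.Prime ∧ pq.2.Prime ∧
    Real.sqrt x / r < (pq.1 : ℝ) ∧ (pq.1 : ℝ) ≤ Real.sqrt x ∧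
    x / (r * (pq.1 : ℝ)) < (pq.2 : ℝ) ∧ (pq.2 : ℝ) ≤ x / (pq.1 : ℝ)}

/-!
Each notion counts the prime points of a region in the positive quadrant, so everything reduces to
inclusions between regions below the hyperbola `p * q = x`.

If `√(x / r) < q` and `p * q ≤ x`, then `p * q ≤ x < r * q ^ 2`, so `p < r * q`. Used on both
coordinates, this puts the fixed-bound region inside the de Weger region; it also gives
`p ^ 2 < r * (p * q) ≤ r * x`, so for `σ ≥ 1` the upper bounds of the fixed-bound notion hold
automatically. The de Weger region is symmetric in `p` and `q`, and its half `p ≤ q` lies in the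
algorithmic region; this is the source of the factor `2`. Finally, `p ≤ √x` turns
`x / (r * p) < q` into `√x / r < q`, which is the lower bound of the fixed-bound notion for `r ^ 2`.
-/

open Set

/-- The pairs of primes lying, as points of the plane, in the region `R`. -/
def primePairs (R : Set (ℝ × ℝ)) : Set (ℕ × ℕ) :=
  {pq | pq.1.Prime ∧ pq.2.Prime ∧ ((pq.1 : ℝ), (pq.2 : ℝ)) ∈ R}

/-- The region of the fixed-bound notion, whose prime points are counted by `NFIX`. -/
def fixRegion (r σ x : ℝ) : Set (ℝ × ℝ) :=
  {z | √(x / r) < z.1 ∧ z.1 ≤ √(r ^ σ * x) ∧ √(x / r) < z.2 ∧ z.2 ≤ √(r ^ σ * x) ∧ z.1 * z.2 ≤ x}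

/-- The region of the de Weger notion, whose prime points are counted by `NDM`. -/
def deWegerRegion (r x : ℝ) : Set (ℝ × ℝ) :=
  {z | z.1 / r < z.2 ∧ z.2 < r * z.1 ∧ x / r < z.1 * z.2 ∧ z.1 * z.2 ≤ x}

/-- The region of the algorithmically inspired notion, whose prime points are counted by `NALG`. -/
def algRegion (r x : ℝ) : Set (ℝ × ℝ) :=
  {z | √x / r < z.1 ∧ z.1 ≤ √x ∧ x / (r * z.1) < z.2 ∧ z.2 ≤ x / z.1}

theorem NFIX_eq_ncard (r σ x : ℝ) : NFIX r σ x = (primePairs (fixRegion r σ x)).ncard := rfl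

theorem NDM_eq_ncard (r x : ℝ) : NDM r x = (primePairs (deWegerRegion r x)).ncard := rfl

theorem NALG_eq_ncard (r x : ℝ) : NALG r x = (primePairs (algRegion r x)).ncard := rfl

section PrimePairs

variable {R S : Set (ℝ × ℝ)}

theorem primePairs_subset_primePairs (h : ∀ p q : ℝ, 0 < p → 0 < q → (p, q) ∈ R → (p, q) ∈ S) :
    primePairs R ⊆ primePairs S :=
  fun _ ⟨hp, hq, hR⟩ ↦ ⟨hp, hq, h _ _ (Nat.cast_pos.2 hp.pos) (Nat.cast_pos.2 hq.pos) hR⟩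

theorem primePairs_union (R S : Set (ℝ × ℝ)) :
    primePairs (R ∪ S) = primePairs R ∪ primePairs S := by
  ext
  simp only [primePairs, mem_union, mem_ofPred_eq]
  tauto

theorem primePairs_preimage_swap (R : Set (ℝ × ℝ)) :
    primePairs (Prod.swap ⁻¹' R) = Prod.swap '' primePairs R := by
  rw [image_swap_eq_preimage_swap]
  ext
  exact and_left_comm

theorem finite_primePairs {x : ℝ} (h : ∀ p q : ℝ, 0 < p → 0 < q → (p, q) ∈ R → p * q ≤ x) :
    (primePairs R).Finite := by
  refine ((finite_Iic ⌊x⌋₊).prod (finite_Iic ⌊x⌋₊)).subset ?_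
  rintro ⟨p, q⟩ ⟨hp, hq, hR⟩
  have hpq : ((p * q : ℕ) : ℝ) ≤ x := by
    exact_mod_cast h p q (Nat.cast_pos.2 hp.pos) (Nat.cast_pos.2 hq.pos) hR
  have hfloor : p * q ≤ ⌊x⌋₊ := Nat.le_floor hpq
  exact ⟨(Nat.le_mul_of_pos_right p hq.pos).trans hfloor,
    (Nat.le_mul_of_pos_left q hp.pos).trans hfloor⟩

end PrimePairs

theorem finite_primePairs_fixRegion (r σ x : ℝ) : (primePairs (fixRegion r σ x)).Finite :=
  finite_primePairs fun _ _ _ _ ⟨_, _, _, _, hpq⟩ ↦ hpq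

theorem finite_primePairs_deWegerRegion (r x : ℝ) : (primePairs (deWegerRegion r x)).Finite :=
  finite_primePairs fun _ _ _ _ ⟨_, _, _, hpq⟩ ↦ hpq

theorem finite_primePairs_algRegion (r x : ℝ) : (primePairs (algRegion r x)).Finite :=
  finite_primePairs fun _ _ hp _ ⟨_, _, _, hq⟩ ↦ (le_div_iff₀' hp).1 hq

section Regions

variable {r σ x p q : ℝ}

theorem lt_mul_of_sqrt_div_lt (hr : 0 < r) (hq : 0 < q) (hxq : √(x / r) < q) (hpq : p * q ≤ x) :
    p < r * q := by
  have hxr : x < q ^ 2 * r := by rwa [Real.sqrt_lt' hq, div_lt_iff₀ hr] at hxq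
  refine lt_of_mul_lt_mul_right ?_ hq.le
  calc p * q ≤ x := hpq
    _ < q ^ 2 * r := hxr
    _ = r * q * q := by ring

theorem le_sqrt_mul_of_sqrt_div_lt (hr : 0 < r) (hp : 0 < p) (hq : 0 < q) (hxq : √(x / r) < q)
    (hpq : p * q ≤ x) : p ≤ √(r * x) := by
  have hprq : p < r * q := lt_mul_of_sqrt_div_lt hr hq hxq hpq
  refine Real.le_sqrt_of_sq_le ?_
  calc p ^ 2 = p * p := sq p
    _ ≤ p * (r * q) := by gcongr
    _ = r * (p * q) := by ring
    _ ≤ r * x := by gcongr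

theorem mem_deWegerRegion_of_mem_fixRegion (hr : 0 < r) (hp : 0 < p) (hq : 0 < q)
    (h : (p, q) ∈ fixRegion r σ x) : (p, q) ∈ deWegerRegion r x := by
  obtain ⟨hxp, -, hxq, -, hpq⟩ := h
  have hx : 0 < x := (mul_pos hp hq).trans_le hpq
  refine ⟨(div_lt_iff₀' hr).2 (lt_mul_of_sqrt_div_lt hr hq hxq hpq),
    lt_mul_of_sqrt_div_lt hr hp hxp (by rwa [mul_comm]), ?_, hpq⟩
  calc x / r = √(x / r) * √(x / r) := (Real.mul_self_sqrt (by positivity)).symm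
    _ < p * q := by gcongr

theorem mem_fixRegion_of_sqrt_div_lt (hr : 1 ≤ r) (hσ : 1 ≤ σ) (hp : 0 < p) (hq : 0 < q)
    (hxp : √(x / r) < p) (hxq : √(x / r) < q) (hpq : p * q ≤ x) : (p, q) ∈ fixRegion r σ x := by
  have hr₀ : 0 < r := one_pos.trans_le hr
  have hx : 0 < x := (mul_pos hp hq).trans_le hpq
  have hbound : √(r * x) ≤ √(r ^ σ * x) := by
    gcongr
    exact Real.self_le_rpow_of_one_le hr hσ
  exact ⟨hxp, (le_sqrt_mul_of_sqrt_div_lt hr₀ hp hq hxq hpq).trans hbound,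
    hxq, (le_sqrt_mul_of_sqrt_div_lt hr₀ hq hp hxp (by rwa [mul_comm])).trans hbound, hpq⟩

theorem mem_fixRegion_sq_of_mem_algRegion (hr : 1 ≤ r) (hσ : 1 ≤ σ) (hp : 0 < p) (hq : 0 < q)
    (h : (p, q) ∈ algRegion r x) : (p, q) ∈ fixRegion (r ^ 2) σ x := by
  obtain ⟨hxp, hpx, hxq, hqx⟩ := h
  have hr₀ : 0 < r := one_pos.trans_le hr
  have hpq : p * q ≤ x := (le_div_iff₀' hp).1 hqx
  have hx : 0 < x := (mul_pos hp hq).trans_le hpq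
  have hsqrt : √(x / r ^ 2) = √x / r := by rw [Real.sqrt_div hx.le, Real.sqrt_sq hr₀.le]
  refine mem_fixRegion_of_sqrt_div_lt (one_le_pow₀ hr) hσ hp hq (hsqrt ▸ hxp) ?_ hpq
  calc √(x / r ^ 2) = x / √x / r := by rw [hsqrt, Real.div_sqrt]
    _ ≤ x / p / r := by gcongr
    _ = x / (r * p) := by rw [div_div, mul_comm]
    _ < q := hxq

theorem mem_algRegion_of_mem_deWegerRegion (hp : 0 < p) (hle : p ≤ q)
    (h : (p, q) ∈ deWegerRegion r x) : (p, q) ∈ algRegion r x := by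
  obtain ⟨-, hqr, hxr, hpq⟩ := h
  have hr : 0 < r := pos_of_mul_pos_left (hp.trans_le hle |>.trans hqr) hp.le
  have hxr' : x < r * p * q := by rwa [div_lt_iff₀' hr, ← mul_assoc] at hxr
  refine ⟨?_, ?_, (div_lt_iff₀' (by positivity)).2 hxr', (le_div_iff₀' hp).2 hpq⟩
  · rw [div_lt_iff₀' hr, Real.sqrt_lt' (by positivity)]
    calc x < r * p * q := hxr'
      _ < r * p * (r * p) := by gcongr
      _ = (r * p) ^ 2 := (sq _).symm
  · refine Real.le_sqrt_of_sq_le ?_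
    calc p ^ 2 = p * p := sq p
      _ ≤ p * q := by gcongr
      _ ≤ x := hpq

theorem swap_mem_deWegerRegion (hp : 0 < p) (hq : 0 < q) (h : (p, q) ∈ deWegerRegion r x) :
    (q, p) ∈ deWegerRegion r x := by
  obtain ⟨hpr, hqr, hxr, hpq⟩ := h
  have hr : 0 < r := pos_of_mul_pos_left (hq.trans hqr) hp.le
  exact ⟨(div_lt_iff₀' hr).2 hqr, (div_lt_iff₀' hr).1 hpr, mul_comm p q ▸ hxr, mul_comm p q ▸ hpq⟩

theorem mem_algRegion_union_swap_of_mem_deWegerRegion (hp : 0 < p) (hq : 0 < q)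
    (h : (p, q) ∈ deWegerRegion r x) : (p, q) ∈ algRegion r x ∪ Prod.swap ⁻¹' algRegion r x :=
  (le_total p q).imp (fun hle ↦ mem_algRegion_of_mem_deWegerRegion hp hle h)
    fun hle ↦ mem_algRegion_of_mem_deWegerRegion hq hle (swap_mem_deWegerRegion hp hq h)

end Regions

theorem NFIX_le_NDM {r : ℝ} (hr : 0 < r) (σ x : ℝ) : NFIX r σ x ≤ NDM r x := by
  rw [NFIX_eq_ncard, NDM_eq_ncard]
  exact ncard_le_ncard
    (primePairs_subset_primePairs fun _ _ ↦ mem_deWegerRegion_of_mem_fixRegion hr)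
    (finite_primePairs_deWegerRegion r x)

theorem NDM_le_two_mul_NALG (r x : ℝ) : NDM r x ≤ 2 * NALG r x := by
  set A := primePairs (algRegion r x) with hA
  have hAfin : A.Finite := finite_primePairs_algRegion r x
  have hsub : primePairs (deWegerRegion r x) ⊆ A ∪ Prod.swap '' A := by
    rw [hA, ← primePairs_preimage_swap, ← primePairs_union]
    exact primePairs_subset_primePairs fun _ _ ↦ mem_algRegion_union_swap_of_mem_deWegerRegion
  calc NDM r x = (primePairs (deWegerRegion r x)).ncard := NDM_eq_ncard r x
    _ ≤ (A ∪ Prod.swap '' A).ncard := ncard_le_ncard hsub (hAfin.union (hAfin.image _))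
    _ ≤ A.ncard + (Prod.swap '' A).ncard := ncard_union_le _ _
    _ = 2 * A.ncard := by rw [ncard_image_of_injective A Prod.swap_injective, two_mul]
    _ = 2 * NALG r x := by rw [NALG_eq_ncard]

theorem NALG_le_NFIX_sq {r σ : ℝ} (hr : 1 ≤ r) (hσ : 1 ≤ σ) (x : ℝ) :
    NALG r x ≤ NFIX (r ^ 2) σ x := by
  rw [NALG_eq_ncard, NFIX_eq_ncard]
  exact ncard_le_ncard
    (primePairs_subset_primePairs fun _ _ ↦ mem_fixRegion_sq_of_mem_algRegion hr hσ)
    (finite_primePairs_fixRegion (r ^ 2) σ x)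

theorem notions_enclose_general {r τ : ℝ} (hr : 1 ≤ r) (hτ : 1 ≤ τ) (σ x : ℝ) :
    NFIX r σ x ≤ NDM r x ∧ NDM r x ≤ 2 * NALG r x ∧ NALG r x ≤ NFIX (r ^ 2) τ x :=
  ⟨NFIX_le_NDM (one_pos.trans_le hr) σ x, NDM_le_two_mul_NALG r x, NALG_le_NFIX_sq hr hτ x⟩

/-- Lemma 6.2 of the paper: enclosing the notions by each other. -/
theorem notions_enclose (r x : ℝ) (hr : 1 < r) (hx : 1 < x) :
    NFIX r 1 x ≤ NDM r x ∧
    NDM r x ≤ 2 * NALG r x ∧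
    NALG r x ≤ NFIX (r ^ 2) 1 x := by
  exact notions_enclose_general hr.le le_rfl 1 x
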